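/- The affine cone over the Grassmannian G(2,m) in Plücker coordinates, i.e., the zero set of the Plücker relations in ℂ^{C(m,2)}, has Krull dimension 2(m−2)+1 = 2m−3 for m ≥ 4. -/

import Mathlib

open MvPolynomial

/-- Index set for the Plücker variables `T_{ij}`, `i < j`. -/
abbrev PIdx (n : ℕ) := {p : Fin n × Fin n // p.1 < p.2}

/-- The variable `T_{ij}`. -/
noncomputable def Tv {K : Type*} [CommRing K] {n : ℕ} (i j : Fin n) (h : i < j) :
    MvPolynomial (PIdx n) K := X ⟨(i, j), h⟩

/-- The Plücker relation `P_{ijkl} = T_{ij}T_{kl} - T_{ik}T_{jl} + T_{il}T_{jk}`. -/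
noncomputable def pluck {K : Type*} [CommRing K] {n : ℕ} (i j k l : Fin n)
    (hij : i < j) (hjk : j < k) (hkl : k < l) : MvPolynomial (PIdx n) K :=
  Tv i j hij * Tv k l hkl - Tv i k (hij.trans hjk) * Tv j l (hjk.trans hkl)
    + Tv i l (hij.trans (hjk.trans hkl)) * Tv j k hjk

/-- The set of all Plücker relations. -/
def pluckerSet (K : Type*) [CommRing K] (n : ℕ) : Set (MvPolynomial (PIdx n) K) :=
  {P | ∃ (i j k l : Fin n) (hij : i < j) (hjk : j < k) (hkl : k < l),
    P = pluck i j k l hij hjk hkl}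

/-! For the upper bound, give `T_{ij}` the weight `i + j`. The `2m - 3` linear forms
`θ_n = ∑_{i + j = n} T_{ij}` cut out only the origin of the cone: modulo the Plücker relations and
the variables of weight `< n`, two distinct variables of weight `n` have product `0`, so
`T_{ij} θ_n = T_{ij}²`, and all variables are nilpotent modulo the `θ_n` by induction on `n`. By
graded Nakayama the coordinate ring is then finite over the subring generated by the `θ_n`.

For the lower bound, parametrize the cone by the minors `a_i b_j - a_j b_i` and let the first
coordinates of `a` and `b` vanish one after the other. The minor of columns `s < t`, where `s` and
`t` are the positions of the first nonzero coordinates of `a` and `b`, is the monomial `a_s b_t`;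
each step kills it, although it is not a zero divisor, and so lowers the dimension. There are
`2m - 3` such steps from `(s, t) = (0, 1)` to `(m - 1, m - 1)`.
-/

open scoped nonZeroDivisors

section KrullDimension

variable {R A B C : Type*} [CommRing A] [CommRing B] [CommRing C]

lemma ringKrullDim_le_of_isIntegral [Algebra A B] [Algebra.IsIntegral A B] :
    ringKrullDim B ≤ ringKrullDim A :=
  Order.krullDim_le_of_strictMono (PrimeSpectrum.comap (algebraMap A B)) fun I J hIJ ↦
    Ideal.IsIntegral.comap_lt_comap (R := A) (I := I.asIdeal) (J := J.asIdeal) hIJ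

lemma ringKrullDim_range_comp_succ_le [CommRing R] [Algebra R A] [Algebra R B] [Algebra R C]
    (f : A →ₐ[R] B) (g : B →ₐ[R] C) {x : A} (hx : f x ∈ B⁰) (hgx : g (f x) = 0) :
    ringKrullDim (g.comp f).range + 1 ≤ ringKrullDim f.range := by
  have hg (y : f.range) : g y ∈ (g.comp f).range := by
    obtain ⟨_, a, rfl⟩ := y
    exact ⟨a, rfl⟩
  let g' : f.range →ₐ[R] (g.comp f).range := (g.comp f.range.val).codRestrict _ hg
  have hg' : Function.Surjective g' := by
    rintro ⟨_, a, rfl⟩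
    exact ⟨⟨f a, a, rfl⟩, rfl⟩
  have hx' : f.rangeRestrict x ∈ (f.range)⁰ :=
    comap_nonZeroDivisors_le_of_injective (f := f.range.val) Subtype.val_injective hx
  exact ringKrullDim_succ_le_of_surjective g'.toRingHom hg' hx' (Subtype.ext hgx)

lemma ringKrullDim_le_of_algHom [Algebra A B] (f : B →ₐ[A] A) :
    ringKrullDim A ≤ ringKrullDim B :=
  ringKrullDim_le_of_surjective f.toRingHom fun a ↦ ⟨algebraMap A B a, f.commutes a⟩

end KrullDimension

section HomogeneousParameters

variable {σ ι K : Type*} [CommRing K] {J : Ideal (MvPolynomial σ K)}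
  {θ : ι → MvPolynomial σ K} {d : ι → ℕ}

attribute [local instance] MvPolynomial.gradedAlgebra

lemma homogeneousComponent_mul_of_isHomogeneous {p : MvPolynomial σ K} {e : ℕ}
    (hp : p.IsHomogeneous e) (q : MvPolynomial σ K) (n : ℕ) :
    homogeneousComponent n (p * q) = if e ≤ n then p * homogeneousComponent (n - e) q else 0 := by
  simp only [← decomposition.decompose'_apply]
  exact DirectSum.coe_decompose_mul_of_left_mem (homogeneousSubmodule σ K) n hp

lemma exists_isHomogeneous_sub_sum_mem [Fintype ι]
    (hJ : J.IsHomogeneous (homogeneousSubmodule σ K)) (hθ : ∀ k, (θ k).IsHomogeneous (d k))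
    {u : MvPolynomial σ K} {n : ℕ} (hu : u.IsHomogeneous n)
    (hmem : u ∈ J ⊔ Ideal.span (Set.range θ)) :
    ∃ c : ι → MvPolynomial σ K,
      (∀ k, (c k).IsHomogeneous (n - d k)) ∧ u - ∑ k, θ k * c k ∈ J := by
  obtain ⟨g, hg, h, hh, rfl⟩ := Submodule.mem_sup.mp hmem
  obtain ⟨b, rfl⟩ := (Submodule.mem_span_range_iff_exists_fun _).mp hh
  refine ⟨fun k ↦ if d k ≤ n then homogeneousComponent (n - d k) (b k) else 0, fun k ↦ ?_, ?_⟩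
  · dsimp only
    split_ifs
    · exact homogeneousComponent_isHomogeneous _ _
    · exact isHomogeneous_zero _ _ _
  · convert homogeneousComponent_mem_of_mem hJ hg n using 1
    rw [← homogeneousComponent_eq_self hu, map_add, map_sum, sub_eq_iff_eq_add, add_right_inj]
    refine Finset.sum_congr rfl fun k _ ↦ ?_
    rw [smul_eq_mul, mul_comm, homogeneousComponent_mul_of_isHomogeneous (hθ k), mul_ite, mul_zero]

lemma sup_span_monomial_eq_top [Finite ι]
    (hJ : J.IsHomogeneous (homogeneousSubmodule σ K)) (hθ : ∀ k, (θ k).IsHomogeneous (d k))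
    (hd : ∀ k, 0 < d k) {N : ℕ} (hN : idealOfVars σ K ^ N ≤ J ⊔ Ideal.span (Set.range θ)) :
    J.restrictScalars (Algebra.adjoin K (Set.range θ)) ⊔
      Submodule.span (Algebra.adjoin K (Set.range θ))
        ((monomial · (1 : K)) '' {s | s.degree ≤ N}) = ⊤ := by
  cases nonempty_fintype ι
  set A := Algebra.adjoin K (Set.range θ)
  set M := J.restrictScalars A ⊔
    Submodule.span A ((monomial · (1 : K)) '' {s : σ →₀ ℕ | s.degree ≤ N})
  have hlow {n : ℕ} (hn : n ≤ N) {u : MvPolynomial σ K} (hu : u.IsHomogeneous n) : u ∈ M := by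
    rw [u.as_sum]
    refine Submodule.sum_mem _ fun s hs ↦ ?_
    have hsN : s.degree ≤ N := (hu.degree_eq_sum_deg_support hs).symm.trans_le hn
    have hmon : monomial s (1 : K) ∈ M :=
      Submodule.mem_sup_right (Submodule.subset_span ⟨s, hsN, rfl⟩)
    simpa [smul_monomial] using M.smul_of_tower_mem (coeff s u) hmon
  have hhom (n : ℕ) {u : MvPolynomial σ K} (hu : u.IsHomogeneous n) : u ∈ M := by
    induction n using Nat.strong_induction_on generalizing u with
    | _ n ih =>
    obtain hn | hn := le_or_gt n N
    · exact hlow hn hu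
    have hpow : u ∈ idealOfVars σ K ^ N := by
      refine (mem_pow_idealOfVars_iff N u).mpr fun s hs ↦ ?_
      exact hn.le.trans_eq (hu.degree_eq_sum_deg_support hs)
    obtain ⟨c, hc, hcu⟩ := exists_isHomogeneous_sub_sum_mem hJ hθ hu (hN hpow)
    rw [← sub_add_cancel u (∑ k, θ k * c k)]
    refine M.add_mem (Submodule.mem_sup_left hcu) (M.sum_mem fun k _ ↦ ?_)
    have hck : c k ∈ M := ih (n - d k) (Nat.sub_lt (by lia) (hd k)) (hc k)
    exact M.smul_mem (⟨θ k, Algebra.subset_adjoin ⟨k, rfl⟩⟩ : A) hck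
  refine eq_top_iff.mpr fun u _ ↦ ?_
  rw [← sum_homogeneousComponent u]
  exact M.sum_mem fun n _ ↦ hhom n (homogeneousComponent_isHomogeneous n u)

theorem finite_quotient_of_X_mem_radical [Finite σ] [Finite ι]
    (hJ : J.IsHomogeneous (homogeneousSubmodule σ K)) (hθ : ∀ k, (θ k).IsHomogeneous (d k))
    (hd : ∀ k, 0 < d k) (hX : ∀ s, X s ∈ (J ⊔ Ideal.span (Set.range θ)).radical) :
    Module.Finite (Algebra.adjoin K (Set.range θ)) (MvPolynomial σ K ⧸ J) := by
  set A := Algebra.adjoin K (Set.range θ)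
  have hvars : idealOfVars σ K ≤ (J ⊔ Ideal.span (Set.range θ)).radical :=
    Ideal.span_le.mpr (Set.range_subset_iff.mpr hX)
  obtain ⟨N, hN⟩ := Ideal.exists_pow_le_of_le_radical_of_fg hvars (idealOfVars_fg σ K)
  have hfg : (Submodule.span A ((monomial · (1 : K)) '' {s : σ →₀ ℕ | s.degree ≤ N})).FG :=
    Submodule.fg_span ((Finsupp.finite_of_degree_le N).image _)
  have : Module.Finite A (MvPolynomial σ K ⧸ J.restrictScalars A) :=
    ⟨(Submodule.map_mkQ_eq_top _ _).mpr (sup_span_monomial_eq_top hJ hθ hd hN) ▸ hfg.map _⟩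
  exact Module.Finite.equiv (Submodule.Quotient.restrictScalarsEquiv A J)

lemma ringKrullDim_quotient_le_of_X_mem_radical [Finite σ] [Finite ι]
    (hJ : J.IsHomogeneous (homogeneousSubmodule σ K)) (hθ : ∀ k, (θ k).IsHomogeneous (d k))
    (hd : ∀ k, 0 < d k) (hX : ∀ s, X s ∈ (J ⊔ Ideal.span (Set.range θ)).radical) :
    ringKrullDim (MvPolynomial σ K ⧸ J) ≤ ringKrullDim (MvPolynomial ι K) := by
  have := finite_quotient_of_X_mem_radical hJ hθ hd hX
  calc ringKrullDim (MvPolynomial σ K ⧸ J)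
      ≤ ringKrullDim (Algebra.adjoin K (Set.range θ)) := ringKrullDim_le_of_isIntegral
    _ = ringKrullDim (aeval θ : MvPolynomial ι K →ₐ[K] MvPolynomial σ K).range := by
      rw [Algebra.adjoin_range_eq_range_aeval]
    _ ≤ ringKrullDim (MvPolynomial ι K) :=
      ringKrullDim_le_of_surjective _ (aeval θ).rangeRestrict_surjective

end HomogeneousParameters

section UpperBound

variable {K : Type*} [CommRing K] {m : ℕ}

attribute [local instance] MvPolynomial.gradedAlgebra

lemma isHomogeneous_span_pluckerSet (K : Type*) [CommRing K] (m : ℕ) :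
    (Ideal.span (pluckerSet K m)).IsHomogeneous (homogeneousSubmodule (PIdx m) K) := by
  refine Ideal.homogeneous_span _ _ ?_
  rintro _ ⟨i, j, k, l, hij, hjk, hkl, rfl⟩
  have hquad (p q : PIdx m) : (X p * X q : MvPolynomial (PIdx m) K).IsHomogeneous 2 :=
    (isHomogeneous_X K p).mul (isHomogeneous_X K q)
  exact ⟨2, ((hquad _ _).sub (hquad _ _)).add (hquad _ _)⟩

/-- The weight `i + j` of the Plücker variable `T_{ij}`, where `i` and `j` are counted from `0`;
weights range over `1, …, 2m - 3`. -/
def PIdx.weight (p : PIdx m) : ℕ := p.1.1 + p.1.2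

lemma PIdx.exists_weight_eq_succ (p : PIdx m) : ∃ n : Fin (2 * m - 3), p.weight = n + 1 := by
  have hlt : (p.1.1 : ℕ) < p.1.2 := p.2
  have := p.1.2.2
  unfold PIdx.weight
  exact ⟨⟨p.1.1 + p.1.2 - 1, by lia⟩, by lia⟩

/-- The linear form `θ_n`, the sum of the Plücker variables of weight `n`. -/
noncomputable def weightForm (K : Type*) [CommRing K] (m n : ℕ) : MvPolynomial (PIdx m) K :=
  ∑ p : PIdx m with p.weight = n, X p

lemma isHomogeneous_weightForm (n : ℕ) : (weightForm K m n).IsHomogeneous 1 :=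
  IsHomogeneous.sum _ _ _ fun p _ ↦ isHomogeneous_X K p

lemma X_mul_X_mem_of_nested {I : Ideal (MvPolynomial (PIdx m) K)} (hI : pluckerSet K m ⊆ I)
    {i k l j : Fin m} (hik : i < k) (hkl : k < l) (hlj : l < j)
    (hTik : X ⟨(i, k), hik⟩ ∈ I) (hTil : X ⟨(i, l), hik.trans hkl⟩ ∈ I) :
    X ⟨(i, j), hik.trans (hkl.trans hlj)⟩ * X ⟨(k, l), hkl⟩ ∈ I := by
  have hP : pluck i k l j hik hkl hlj ∈ I := hI ⟨i, k, l, j, hik, hkl, hlj, rfl⟩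
  have h := I.add_mem (I.sub_mem hP (I.mul_mem_right (Tv l j hlj) hTik))
    (I.mul_mem_right (Tv k j (hkl.trans hlj)) hTil)
  convert h using 1
  simp only [pluck, Tv]
  ring

lemma X_mul_X_mem_of_weight_eq {I : Ideal (MvPolynomial (PIdx m) K)} (hI : pluckerSet K m ⊆ I)
    {p q : PIdx m} (hpq : p ≠ q) (hw : p.weight = q.weight)
    (hlt : ∀ r : PIdx m, r.weight < p.weight → X r ∈ I) : X p * X q ∈ I := by
  obtain ⟨⟨i, j⟩, hij⟩ := p
  obtain ⟨⟨k, l⟩, hkl⟩ := q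
  simp only [PIdx.weight] at hw hlt hij hkl
  obtain h | rfl | h := lt_trichotomy i k
  · exact X_mul_X_mem_of_nested hI h hkl (by lia) (hlt ⟨(i, k), h⟩ (by lia))
      (hlt ⟨(i, l), h.trans hkl⟩ (by lia))
  · exact absurd (by ext <;> lia) hpq
  · rw [mul_comm]
    exact X_mul_X_mem_of_nested hI h hij (by lia) (hlt ⟨(k, i), h⟩ (by lia))
      (hlt ⟨(k, j), h.trans hij⟩ (by lia))

lemma sq_mem_of_sum_mem {R ι : Type*} [CommRing R] {I : Ideal R} {s : Finset ι} {x : ι → R} {i : ι}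
    (hi : i ∈ s) (hsum : ∑ j ∈ s, x j ∈ I) (hmul : ∀ j ∈ s, j ≠ i → x j * x i ∈ I) :
    x i ^ 2 ∈ I := by
  classical
  have hsplit : x i ^ 2 = (∑ j ∈ s, x j) * x i - ∑ j ∈ s.erase i, x j * x i := by
    rw [Finset.sum_mul, ← Finset.add_sum_erase s _ hi]
    ring
  rw [hsplit]
  exact I.sub_mem (I.mul_mem_right _ hsum) <| I.sum_mem fun j hj ↦
    hmul j (Finset.mem_of_mem_erase hj) (Finset.ne_of_mem_erase hj)

theorem X_mem_radical_span_pluckerSet_sup_weightForm (p : PIdx m) :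
    X p ∈ (Ideal.span (pluckerSet K m) ⊔
      Ideal.span (Set.range fun n : Fin (2 * m - 3) ↦ weightForm K m (n + 1))).radical := by
  set I := Ideal.span (pluckerSet K m) ⊔
    Ideal.span (Set.range fun n : Fin (2 * m - 3) ↦ weightForm K m (n + 1))
  have hI : pluckerSet K m ⊆ I.radical := fun P hP ↦
    Ideal.le_radical (Ideal.mem_sup_left (Ideal.subset_span hP))
  induction hw : p.weight using Nat.strong_induction_on generalizing p with
  | _ w ih =>
  have hform : weightForm K m p.weight ∈ I.radical := by
    obtain ⟨n, hn⟩ := p.exists_weight_eq_succ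
    rw [hn]
    exact Ideal.le_radical (Ideal.mem_sup_right (Ideal.subset_span ⟨n, rfl⟩))
  have hsq : X p ^ 2 ∈ I.radical := by
    refine sq_mem_of_sum_mem (by simp) hform fun q hq hqp ↦ ?_
    have hq : q.weight = p.weight := (Finset.mem_filter.mp hq).2
    exact X_mul_X_mem_of_weight_eq hI hqp hq fun r hr ↦ ih _ (by lia) r rfl
  exact I.radical_isRadical ⟨2, hsq⟩

theorem ringKrullDim_quotient_pluckerSet_le :
    ringKrullDim (MvPolynomial (PIdx m) K ⧸ Ideal.span (pluckerSet K m)) ≤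
      ringKrullDim (MvPolynomial (Fin (2 * m - 3)) K) :=
  ringKrullDim_quotient_le_of_X_mem_radical (isHomogeneous_span_pluckerSet K m)
    (fun n ↦ isHomogeneous_weightForm (n + 1)) (fun _ ↦ one_pos)
    X_mem_radical_span_pluckerSet_sup_weightForm

end UpperBound

section LowerBound

variable {K B C : Type*} [CommRing K] [CommRing B] [Algebra K B] [CommRing C] [Algebra K C] {m : ℕ}

/-- The homomorphism `T_{ij} ↦ a_i b_j - a_j b_i` sending the Plücker variables to the maximal
minors of the `2 × m` matrix with rows `a` and `b`. -/
noncomputable def minorHom (K : Type*) [CommRing K] [Algebra K B] (a b : Fin m → B) :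
    MvPolynomial (PIdx m) K →ₐ[K] B :=
  aeval fun p ↦ a p.1.1 * b p.1.2 - a p.1.2 * b p.1.1

lemma minorHom_X (a b : Fin m → B) (p : PIdx m) :
    minorHom K a b (X p) = a p.1.1 * b p.1.2 - a p.1.2 * b p.1.1 :=
  aeval_X _ _

lemma comp_minorHom (g : B →ₐ[K] C) (a b : Fin m → B) :
    g.comp (minorHom K a b) = minorHom K (g ∘ a) (g ∘ b) := by
  ext p
  simp [minorHom_X]

lemma span_pluckerSet_le_ker_minorHom (a b : Fin m → B) :
    Ideal.span (pluckerSet K m) ≤ RingHom.ker (minorHom K a b) := by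
  rw [Ideal.span_le]
  rintro _ ⟨i, j, k, l, hij, hjk, hkl, rfl⟩
  simp only [SetLike.mem_coe, RingHom.mem_ker, pluck, Tv, map_add, map_sub, map_mul, minorHom_X]
  ring

lemma ringKrullDim_range_minorHom_le (a b : Fin m → B) :
    ringKrullDim (minorHom K a b).range ≤
      ringKrullDim (MvPolynomial (PIdx m) K ⧸ Ideal.span (pluckerSet K m)) := by
  let f := (minorHom K a b).rangeRestrict
  have hf : ∀ P ∈ Ideal.span (pluckerSet K m), f P = 0 := fun P hP ↦
    Subtype.ext (span_pluckerSet_le_ker_minorHom a b hP)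
  exact ringKrullDim_le_of_surjective (Ideal.Quotient.lift _ f.toRingHom hf)
    (Ideal.Quotient.lift_surjective_of_surjective _ hf (minorHom K a b).rangeRestrict_surjective)

/-- A vector of independent variables, indexed by `x`, with the first `s` of them replaced
by `0`. -/
noncomputable def tailVector (K : Type*) [CommRing K] {σ : Type*} (x : Fin m → σ) (s : ℕ)
    (i : Fin m) : MvPolynomial σ K :=
  if (i : ℕ) < s then 0 else X (x i)

/-- The coordinate ring of the cone over a Schubert variety in `G(2,m)`, realized as the algebra
generated by the minors `a_i b_j - a_j b_i`, where `a_i = 0` for `i < s`, `b_j = 0` for `j < t`,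
and the other `a_i = X (.inl i)` and `b_j = X (.inr j)` are independent variables. -/
noncomputable def schubertRing (K : Type*) [CommRing K] (m s t : ℕ) :
    Subalgebra K (MvPolynomial (Fin m ⊕ Fin m) K) :=
  (minorHom K (tailVector K Sum.inl s) (tailVector K Sum.inr t)).range

lemma aeval_comp_tailVector {σ : Type*} (x : Fin m → σ) (y : σ → MvPolynomial σ K) {s s' : ℕ}
    (hs : s ≤ s') (hy : y ∘ x = tailVector K x s') :
    aeval (R := K) y ∘ tailVector K x s = tailVector K x s' := by
  rw [← hy]
  ext1 i
  have hi : y (x i) = tailVector K x s' i := congrFun hy i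
  by_cases h : (i : ℕ) < s
  · simp [tailVector, h, hi, h.trans_le hs]
  · simp [tailVector, h]

lemma ringKrullDim_schubertRing_succ_le {s t s' t' : ℕ} (hst : s < t) (htm : t < m)
    (hs : s ≤ s') (ht : t ≤ t') (hlt : s < s' ∨ t < t') :
    ringKrullDim (schubertRing K m s' t') + 1 ≤ ringKrullDim (schubertRing K m s t) := by
  let g : MvPolynomial (Fin m ⊕ Fin m) K →ₐ[K] MvPolynomial (Fin m ⊕ Fin m) K :=
    aeval (Sum.elim (tailVector K Sum.inl s') (tailVector K Sum.inr t'))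
  let f := minorHom K (tailVector (m := m) K Sum.inl s) (tailVector K Sum.inr t)
  let p : PIdx m := ⟨(⟨s, hst.trans htm⟩, ⟨t, htm⟩), hst⟩
  have hgf : g.comp f = minorHom K (tailVector K Sum.inl s') (tailVector K Sum.inr t') := by
    rw [comp_minorHom, aeval_comp_tailVector Sum.inl _ hs (Sum.elim_comp_inl _ _),
      aeval_comp_tailVector Sum.inr _ ht (Sum.elim_comp_inr _ _)]
  have hfp : f (X p) = X (.inl p.1.1) * X (.inr p.1.2) := by
    simp [f, p, minorHom_X, tailVector, hst]
  have hreg : f (X p) ∈ (MvPolynomial (Fin m ⊕ Fin m) K)⁰ := by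
    rw [hfp]
    exact mul_mem isRegular_X.mem_nonZeroDivisors isRegular_X.mem_nonZeroDivisors
  have hkill : g (f (X p)) = 0 := by
    rw [hfp]
    rcases hlt with h | h <;> simp [g, p, tailVector, h]
  unfold schubertRing
  rw [← hgf]
  exact ringKrullDim_range_comp_succ_le f g hreg hkill

lemma ringKrullDim_add_le_ringKrullDim_schubertRing {n s k : ℕ} (hsk : s + k = n) (hn : n < m) :
    ringKrullDim K + k ≤ ringKrullDim (schubertRing K m s n) := by
  induction k generalizing s with
  | zero =>
    simpa using ringKrullDim_le_of_algHom ((aeval 0).comp (schubertRing K m s n).val)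
  | succ k ih =>
    calc ringKrullDim K + (k + 1 : ℕ) = ringKrullDim K + k + 1 := by push_cast; rw [add_assoc]
      _ ≤ ringKrullDim (schubertRing K m (s + 1) n) + 1 := by grw [ih (s := s + 1) (by lia)]
      _ ≤ ringKrullDim (schubertRing K m s n) :=
        ringKrullDim_schubertRing_succ_le (by lia) hn s.le_succ le_rfl (.inl s.lt_succ_self)

lemma ringKrullDim_add_add_le_ringKrullDim_schubertRing_zero {n t k : ℕ} (ht : 0 < t)
    (htk : t + k = n) (hn : n < m) :
    ringKrullDim K + n + k ≤ ringKrullDim (schubertRing K m 0 t) := by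
  induction k generalizing t with
  | zero =>
    obtain rfl : t = n := htk
    simpa using ringKrullDim_add_le_ringKrullDim_schubertRing (zero_add t) hn
  | succ k ih =>
    calc ringKrullDim K + n + (k + 1 : ℕ) = ringKrullDim K + n + k + 1 := by
          push_cast; rw [add_assoc _ (k : WithBot ℕ∞)]
      _ ≤ ringKrullDim (schubertRing K m 0 (t + 1)) + 1 := by grw [ih t.succ_pos (by lia)]
      _ ≤ ringKrullDim (schubertRing K m 0 t) :=
        ringKrullDim_schubertRing_succ_le ht (by lia) le_rfl t.le_succ (.inr t.lt_succ_self)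

theorem le_ringKrullDim_quotient_pluckerSet (hm : 2 ≤ m) :
    ringKrullDim K + (2 * m - 3 : ℕ) ≤
      ringKrullDim (MvPolynomial (PIdx m) K ⧸ Ideal.span (pluckerSet K m)) :=
  calc ringKrullDim K + (2 * m - 3 : ℕ)
      = ringKrullDim K + (m - 1 : ℕ) + (m - 2 : ℕ) := by
        rw [add_assoc, ← Nat.cast_add]
        congr 2
        lia
    _ ≤ ringKrullDim (schubertRing K m 0 1) :=
      ringKrullDim_add_add_le_ringKrullDim_schubertRing_zero one_pos (by lia) (by lia)
    _ ≤ _ := ringKrullDim_range_minorHom_le _ _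

end LowerBound

theorem stmt_14_general (K : Type*) [CommRing K] [IsNoetherianRing K] {m : ℕ} (hm : 2 ≤ m) :
    ringKrullDim (MvPolynomial (PIdx m) K ⧸ Ideal.span (pluckerSet K m)) =
      ringKrullDim K + (2 * m - 3 : ℕ) := by
  refine le_antisymm ?_ (le_ringKrullDim_quotient_pluckerSet hm)
  simpa using ringKrullDim_quotient_pluckerSet_le (K := K) (m := m)

/-- The affine cone over the Grassmannian `G(2,m)` in Plücker coordinates has
Krull dimension `2(m-2)+1 = 2m-3` for `m ≥ 4`: the Krull dimension of
`ℂ[T_{ij}]/(Plücker relations)` equals `2m-3`. -/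
theorem stmt_14 (m : ℕ) (hm : 4 ≤ m) :
    ringKrullDim (MvPolynomial (PIdx m) ℂ ⧸ Ideal.span (pluckerSet ℂ m)) =
      (2 * m - 3 : ℕ) := by
  simpa [ringKrullDim_eq_zero_of_field] using stmt_14_general ℂ (by lia : 2 ≤ m)
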